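/- Let Ω ⊆ ℝ^{d+1} be an L₀-Lipschitz graph domain and let g be a C¹ map defined on a neighborhood of Ω which is L-bi-Lipschitz from Ω onto its image. There exist constants L₁ > 0 and δ₀ > 0, depending only on L₀, L and d, such that if 0 < δ < δ₀, Dg(w) is invertible for all w ∈ Ω, and ‖Dg(z)∘Dg(w)^{-1} − I‖ ≤ δ for all z, w ∈ Ω, then g(Ω) is an L₁-Lipschitz graph domain. -/

import Mathlib

open Metric MeasureTheory Set
open scoped ENNReal NNReal

noncomputable section

/-- `Ω ⊆ ℝ^{d+1}` is an `M`-Lipschitz graph domain: an open connected set such that, after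
applying a composition `x ↦ c • R x + b` of a translation, dilation and rotation, its boundary
is the radial graph of an `M`-Lipschitz function `r : S^d → [1/(1+M), 1]`. -/
def IsLipschitzGraphDomain (d : ℕ) (M : ℝ) (Ω : Set (EuclideanSpace ℝ (Fin (d + 1)))) : Prop :=
  IsOpen Ω ∧ IsConnected Ω ∧
  ∃ (c : ℝ) (R : EuclideanSpace ℝ (Fin (d + 1)) ≃ₗᵢ[ℝ] EuclideanSpace ℝ (Fin (d + 1)))
    (b : EuclideanSpace ℝ (Fin (d + 1))) (rf : EuclideanSpace ℝ (Fin (d + 1)) → ℝ),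
    0 < c ∧
    frontier ((fun x => c • R x + b) '' Ω) =
      {y | ∃ θ ∈ Metric.sphere (0 : EuclideanSpace ℝ (Fin (d + 1))) 1, y = rf θ • θ} ∧
    (∀ θ ∈ Metric.sphere (0 : EuclideanSpace ℝ (Fin (d + 1))) 1,
      ∀ ψ ∈ Metric.sphere (0 : EuclideanSpace ℝ (Fin (d + 1))) 1,
        |rf θ - rf ψ| ≤ M * dist θ ψ) ∧
    (∀ θ ∈ Metric.sphere (0 : EuclideanSpace ℝ (Fin (d + 1))) 1,
      1 / (1 + M) ≤ rf θ ∧ rf θ ≤ 1)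

/-! The frontier of a Lipschitz graph domain `Ω` is a level set `N (x - p) = c` of a Lipschitz gauge
`N`, so `Ω` is, up to translation, a connected piece of `{N < c}` or `{c < N}`: nothing forces `Ω`
to be bounded. In each case two points of `Ω` are joined in `Ω` by a polygonal path of length
comparable to their distance. Integrating `Dg - A` along such paths, where `A = Dg(w)`, shows that
`g - A` has small Lipschitz constant on `Ω`. A Lipschitz extension of `g - A` turns `g` into a
homeomorphism `h` of the whole space, and the frontier of `g '' Ω` is the level `c` of the function
`y ↦ N (h⁻¹ y - p)`. As `h` is close to `A`, it almost commutes with dilations centred at `p`. Hence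
this function still grows linearly along the rays from `h p`, and its level sets are Lipschitz
radial graphs. -/

open NormedSpace (normalize norm_normalize_eq_one_iff norm_smul_normalize normalize_smul_of_pos
  normalize_eq_self_of_norm_eq_one)

section Gauge

variable {E : Type*} [NormedAddCommGroup E] [NormedSpace ℝ E]

lemma norm_mul_norm_normalize_sub_normalize_le (x y : E) :
    ‖x‖ * ‖normalize x - normalize y‖ ≤ 2 * ‖x - y‖ := by
  have hy : ‖normalize y‖ ≤ 1 := by
    rcases eq_or_ne y 0 with rfl | hy
    · simp
    · exact (norm_normalize_eq_one_iff.mpr hy).le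
  have hsplit : ‖x‖ • (normalize x - normalize y) = (x - y) + (‖y‖ - ‖x‖) • normalize y := by
    rw [smul_sub, sub_smul, norm_smul_normalize, norm_smul_normalize]
    abel
  calc ‖x‖ * ‖normalize x - normalize y‖ = ‖(x - y) + (‖y‖ - ‖x‖) • normalize y‖ := by
        rw [← hsplit, norm_smul, norm_norm]
    _ ≤ ‖x - y‖ + |‖y‖ - ‖x‖| * ‖normalize y‖ := by
        rw [← Real.norm_eq_abs, ← norm_smul]
        exact norm_add_le _ _
    _ ≤ ‖x - y‖ + ‖y - x‖ * 1 := by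
        gcongr
        exact abs_norm_sub_norm_le y x
    _ = 2 * ‖x - y‖ := by rw [norm_sub_rev y x]; ring

lemma lipschitzWith_norm_mul_comp_normalize {q : E → ℝ} {k B : ℝ≥0}
    (hq : LipschitzOnWith k q (sphere 0 1)) (hB : ∀ θ ∈ sphere (0 : E) 1, |q θ| ≤ B) :
    LipschitzWith (B + 2 * k) fun x ↦ ‖x‖ * q (normalize x) := by
  have hmem {x : E} (hx : x ≠ 0) : normalize x ∈ sphere (0 : E) 1 :=
    mem_sphere_zero_iff_norm.mpr (norm_normalize_eq_one_iff.mpr hx)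
  have hbound (x : E) : |‖x‖ * q (normalize x)| ≤ (B + 2 * k) * ‖x‖ := by
    rcases eq_or_ne x 0 with rfl | hx
    · simp
    rw [abs_mul, abs_norm, mul_comm]
    gcongr
    exact (hB _ (hmem hx)).trans (le_add_of_nonneg_right (by positivity))
  refine LipschitzWith.of_dist_le_mul fun x y ↦ ?_
  rw [Real.dist_eq, dist_eq_norm]
  push_cast
  rcases eq_or_ne x 0 with rfl | hx
  · simpa using hbound y
  rcases eq_or_ne y 0 with rfl | hy
  · simpa using hbound x
  have hqxy := hq.dist_le_mul _ (hmem hx) _ (hmem hy)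
  rw [Real.dist_eq, dist_eq_norm] at hqxy
  calc |‖x‖ * q (normalize x) - ‖y‖ * q (normalize y)|
      = |‖x‖ * (q (normalize x) - q (normalize y)) + (‖x‖ - ‖y‖) * q (normalize y)| := by
        congr 1; ring
    _ ≤ ‖x‖ * |q (normalize x) - q (normalize y)| + |‖x‖ - ‖y‖| * |q (normalize y)| := by
        refine (abs_add_le _ _).trans_eq ?_
        rw [abs_mul, abs_mul, abs_norm]
    _ ≤ ‖x‖ * (k * ‖normalize x - normalize y‖) + ‖x - y‖ * B := by
        gcongr
        · exact abs_norm_sub_norm_le x y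
        · exact hB _ (hmem hy)
    _ = k * (‖x‖ * ‖normalize x - normalize y‖) + ‖x - y‖ * B := by ring
    _ ≤ k * (2 * ‖x - y‖) + ‖x - y‖ * B := by
        gcongr ?_ + _
        exact mul_le_mul_of_nonneg_left (norm_mul_norm_normalize_sub_normalize_le x y) k.coe_nonneg
    _ = (B + 2 * k) * ‖x - y‖ := by ring

/-- A `K`-Lipschitz, positively homogeneous function dominating the norm: the Minkowski functional
of a star-shaped body in the unit ball whose boundary is a Lipschitz radial graph. Unlike
Mathlib's `gauge`, which is only subadditive for convex bodies, it is characterised by these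
properties and need not be a seminorm. -/
structure IsLipschitzGauge (K : ℝ≥0) (N : E → ℝ) : Prop where
  lipschitz : LipschitzWith K N
  map_smul_of_nonneg : ∀ (t : ℝ) (x : E), 0 ≤ t → N (t • x) = t * N x
  norm_le : ∀ x, ‖x‖ ≤ N x

/-- The Minkowski functional `x ↦ ‖x‖ / r (x / ‖x‖)` of the body whose boundary is the radial graph
of `r` over the unit sphere. Its value at `0` is `0` whatever `r 0` is. -/
def radialGauge (r : E → ℝ) (x : E) : ℝ := ‖x‖ * (r (normalize x))⁻¹

lemma isLipschitzGauge_radialGauge {r : E → ℝ} {M m : ℝ≥0} (hm : 0 < m)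
    (hlip : LipschitzOnWith M r (sphere 0 1)) (hr : ∀ θ ∈ sphere (0 : E) 1, r θ ∈ Icc (m : ℝ) 1) :
    IsLipschitzGauge (m⁻¹ + 2 * (M / m ^ 2)) (radialGauge r) where
  lipschitz := by
    have hm' : (0 : ℝ) < m := NNReal.coe_pos.mpr hm
    refine lipschitzWith_norm_mul_comp_normalize (q := fun θ ↦ (r θ)⁻¹)
      (LipschitzOnWith.of_dist_le_mul fun θ hθ ψ hψ ↦ ?_) fun θ hθ ↦ ?_
    · have hθm := (hr θ hθ).1
      have hψm := (hr ψ hψ).1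
      rw [dist_inv_inv₀ (hm'.trans_le hθm).ne' (hm'.trans_le hψm).ne', Real.norm_of_nonneg
        (hm'.le.trans hθm), Real.norm_of_nonneg (hm'.le.trans hψm), NNReal.coe_div, NNReal.coe_pow,
        div_mul_eq_mul_div, sq]
      gcongr
      · exact hlip.dist_le_mul θ hθ ψ hψ
      · exact hm'.le.trans hθm
    · rw [abs_of_pos (inv_pos.mpr (hm'.trans_le (hr θ hθ).1)), NNReal.coe_inv]
      exact inv_anti₀ hm' (hr θ hθ).1
  map_smul_of_nonneg t x ht := by
    rcases ht.eq_or_lt with rfl | ht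
    · simp [radialGauge]
    · rw [radialGauge, radialGauge, normalize_smul_of_pos ht, norm_smul, Real.norm_of_nonneg ht.le,
        mul_assoc]
  norm_le x := by
    rcases eq_or_ne x 0 with rfl | hx
    · simp [radialGauge]
    · have hmem := hr (normalize x) (by simpa using hx)
      exact le_mul_of_one_le_right (norm_nonneg x)
        ((one_le_inv₀ ((NNReal.coe_pos.mpr hm).trans_le hmem.1)).mpr hmem.2)

lemma radialGauge_eq_one_iff {r : E → ℝ} (hr : ∀ θ ∈ sphere (0 : E) 1, 0 < r θ) {y : E} :
    radialGauge r y = 1 ↔ ∃ θ ∈ sphere (0 : E) 1, y = r θ • θ := by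
  constructor
  · intro h
    have hy : y ≠ 0 := by rintro rfl; simp [radialGauge] at h
    have hmem : normalize y ∈ sphere (0 : E) 1 := by simpa using hy
    have hry : ‖y‖ = r (normalize y) := (mul_inv_eq_one₀ (hr _ hmem).ne').mp h
    exact ⟨normalize y, hmem, by rw [← hry, norm_smul_normalize]⟩
  · rintro ⟨θ, hθ, rfl⟩
    have hθ1 := mem_sphere_zero_iff_norm.mp hθ
    rw [radialGauge, normalize_smul_of_pos (hr θ hθ), normalize_eq_self_of_norm_eq_one hθ1,
      norm_smul, hθ1, mul_one, Real.norm_of_nonneg (hr θ hθ).le, mul_inv_cancel₀ (hr θ hθ).ne']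

namespace IsLipschitzGauge

variable {K : ℝ≥0} {N : E → ℝ}

lemma nonneg (hN : IsLipschitzGauge K N) (x : E) : 0 ≤ N x := (norm_nonneg x).trans (hN.norm_le x)

lemma map_zero (hN : IsLipschitzGauge K N) : N 0 = 0 := by
  simpa using hN.map_smul_of_nonneg 0 0 le_rfl

lemma comp_linearIsometryEquiv (hN : IsLipschitzGauge K N) (R : E ≃ₗᵢ[ℝ] E) :
    IsLipschitzGauge K (N ∘ R) where
  lipschitz := by simpa using hN.lipschitz.comp R.lipschitz
  map_smul_of_nonneg t x ht := by simpa using hN.map_smul_of_nonneg t (R x) ht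
  norm_le x := by simpa using hN.norm_le (R x)

end IsLipschitzGauge

end Gauge

section FrontierGauge

variable {d : ℕ} {M : ℝ} {Ω : Set (EuclideanSpace ℝ (Fin (d + 1)))}

lemma IsLipschitzGraphDomain.nonneg (hΩ : IsLipschitzGraphDomain d M Ω) : 0 ≤ M := by
  obtain ⟨-, -, c, R, b, r, -, -, hlip, -⟩ := hΩ
  obtain ⟨θ, hθ⟩ : ∃ θ : EuclideanSpace ℝ (Fin (d + 1)), ‖θ‖ = 1 := exists_norm_eq _ zero_le_one
  have hdist : 0 < dist θ (-θ) := by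
    rw [dist_eq_norm, sub_neg_eq_add, ← two_smul ℝ, norm_smul, hθ]
    norm_num
  exact nonneg_of_mul_nonneg_left
    ((abs_nonneg _).trans (hlip θ (by simpa using hθ) (-θ) (by simpa using hθ))) hdist

/-- The Lipschitz constant of the radial gauge of an `M`-Lipschitz function with values in
`[1 / (1 + M), 1]`. -/
def graphGaugeConst (M : ℝ≥0) : ℝ≥0 := 1 + M + 2 * (M * (1 + M) ^ 2)

lemma one_le_graphGaugeConst (M : ℝ≥0) : 1 ≤ graphGaugeConst M := by
  rw [graphGaugeConst, add_assoc]
  exact le_self_add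

lemma IsLipschitzGraphDomain.exists_gauge (hΩ : IsLipschitzGraphDomain d M Ω) :
    ∃ (N : EuclideanSpace ℝ (Fin (d + 1)) → ℝ) (p : EuclideanSpace ℝ (Fin (d + 1))) (c : ℝ),
      IsLipschitzGauge (graphGaugeConst M.toNNReal) N ∧ 0 < c ∧
        frontier Ω = {x | N (x - p) = c} := by
  lift M to ℝ≥0 using hΩ.nonneg
  obtain ⟨-, -, c, R, b, r, hc, hfr, hlip, hr⟩ := hΩ
  have hN : IsLipschitzGauge (graphGaugeConst M) (radialGauge r) := by
    have := isLipschitzGauge_radialGauge (m := (1 + M)⁻¹) (by positivity)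
      (LipschitzOnWith.of_dist_le_mul hlip) (by simpa using hr)
    simpa [graphGaugeConst, div_eq_mul_inv] using this
  have hrpos : ∀ θ ∈ sphere (0 : EuclideanSpace ℝ (Fin (d + 1))) 1, 0 < r θ :=
    fun θ hθ ↦ lt_of_lt_of_le (by positivity) (hr θ hθ).1
  let T := R.toHomeomorph.trans
    ((Homeomorph.smulOfNeZero c hc.ne').trans (Homeomorph.addRight b))
  refine ⟨radialGauge r ∘ R, -(c⁻¹ • R.symm b), c⁻¹, by
    rw [Real.toNNReal_coe]; exact hN.comp_linearIsometryEquiv R, inv_pos.mpr hc, ?_⟩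
  ext x
  have hcenter : c • R x + b = c • R (x - -(c⁻¹ • R.symm b)) := by simp [hc.ne']
  calc x ∈ frontier Ω ↔ c • R x + b ∈ frontier ((fun x ↦ c • R x + b) '' Ω) := by
        rw [← T.injective.mem_set_image, T.image_frontier]; rfl
    _ ↔ radialGauge r (c • R x + b) = 1 := by
        rw [hfr, radialGauge_eq_one_iff hrpos]; rfl
    _ ↔ radialGauge r (R (x - -(c⁻¹ • R.symm b))) = c⁻¹ := by
        rw [hcenter, hN.map_smul_of_nonneg _ _ hc.le, mul_comm, mul_eq_one_iff_eq_inv₀ hc.ne']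

end FrontierGauge

section Quasiconvex

/-- `PolylineJoined s ℓ x y`: the points `x` and `y` are joined inside `s` by a polygonal path of
total length `ℓ`. -/
inductive PolylineJoined {E : Type*} [SeminormedAddCommGroup E] [Module ℝ E] (s : Set E) :
    ℝ → E → E → Prop
  | of_segment_subset {x y : E} (h : segment ℝ x y ⊆ s) : PolylineJoined s (dist x y) x y
  | trans {a b : ℝ} {x y z : E} :
      PolylineJoined s a x y → PolylineJoined s b y z → PolylineJoined s (a + b) x z

/-- A set is `C`-quasiconvex if any two of its points are joined inside it by a polygonal path
whose length is at most `C` times their distance. -/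
def IsQuasiconvexSet {E : Type*} [SeminormedAddCommGroup E] [Module ℝ E] (C : ℝ≥0) (s : Set E) :
    Prop :=
  ∀ ⦃x⦄, x ∈ s → ∀ ⦃y⦄, y ∈ s → ∃ ℓ ≤ C * dist x y, PolylineJoined s ℓ x y

variable {E F : Type*} [NormedAddCommGroup E] [NormedSpace ℝ E] [NormedAddCommGroup F]
  [NormedSpace ℝ F] {s : Set E} {C : ℝ≥0}

namespace PolylineJoined

variable {ℓ : ℝ} {x y : E}

lemma joinedIn (h : PolylineJoined s ℓ x y) : JoinedIn s x y := by
  induction h with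
  | of_segment_subset h => exact JoinedIn.of_segment_subset h
  | trans _ _ hxy hyz => exact hxy.trans hyz

lemma mono {t : Set E} (h : PolylineJoined s ℓ x y) (hst : s ⊆ t) : PolylineJoined t ℓ x y := by
  induction h with
  | of_segment_subset h => exact .of_segment_subset (h.trans hst)
  | trans _ _ hxy hyz => exact hxy.trans hyz

lemma image_add_left (h : PolylineJoined s ℓ x y) (p : E) :
    PolylineJoined ((p + ·) '' s) ℓ (p + x) (p + y) := by
  induction h with
  | @of_segment_subset x y h =>
    rw [← dist_add_left p]
    refine .of_segment_subset ?_
    rw [← segment_translate_image]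
    exact image_mono h
  | trans _ _ hxy hyz => exact hxy.trans hyz

lemma norm_image_sub_sub_le {f : E → F} {φ : E →L[ℝ] F} {η : ℝ} (h : PolylineJoined s ℓ x y)
    (hf : ∀ z ∈ s, DifferentiableAt ℝ f z) (hφ : ∀ z ∈ s, ‖fderiv ℝ f z - φ‖ ≤ η) :
    ‖f y - f x - φ (y - x)‖ ≤ η * ℓ := by
  induction h with
  | @of_segment_subset x y h =>
    rw [dist_comm, dist_eq_norm]
    exact (convex_segment x y).norm_image_sub_le_of_norm_fderiv_le' (fun z hz ↦ hf z (h hz))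
      (fun z hz ↦ hφ z (h hz)) (left_mem_segment ℝ x y) (right_mem_segment ℝ x y)
  | @trans a b x y z _ _ hxy hyz =>
    calc ‖f z - f x - φ (z - x)‖
        = ‖(f y - f x - φ (y - x)) + (f z - f y - φ (z - y))‖ := by
          simp only [map_sub]; abel_nf
      _ ≤ η * a + η * b := norm_add_le_of_le hxy hyz
      _ = η * (a + b) := (mul_add _ _ _).symm

end PolylineJoined

namespace IsQuasiconvexSet

lemma mono_const {C' : ℝ≥0} (hs : IsQuasiconvexSet C s) (hC : C ≤ C') : IsQuasiconvexSet C' s :=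
  fun _ hx _ hy ↦
    let ⟨ℓ, hℓ, h⟩ := hs hx hy
    ⟨ℓ, hℓ.trans (mul_le_mul_of_nonneg_right hC dist_nonneg), h⟩

lemma isPreconnected (hs : IsQuasiconvexSet C s) : IsPreconnected s := by
  rcases s.eq_empty_or_nonempty with rfl | hne
  · exact isPreconnected_empty
  · have hjoined : ∀ᵉ (x ∈ s) (y ∈ s), JoinedIn s x y := fun x hx y hy ↦
      let ⟨_, _, h⟩ := hs hx hy
      h.joinedIn
    exact (isPathConnected_iff.mpr ⟨hne, hjoined⟩).isConnected.isPreconnected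

lemma image_add_left (hs : IsQuasiconvexSet C s) (p : E) : IsQuasiconvexSet C ((p + ·) '' s) := by
  rintro _ ⟨x, hx, rfl⟩ _ ⟨y, hy, rfl⟩
  obtain ⟨ℓ, hℓ, h⟩ := hs hx hy
  exact ⟨ℓ, by rwa [dist_add_left], h.image_add_left p⟩

lemma approximatesLinearOn (hs : IsQuasiconvexSet C s) {f : E → F} {φ : E →L[ℝ] F} {η : ℝ≥0}
    (hf : ∀ z ∈ s, DifferentiableAt ℝ f z) (hφ : ∀ z ∈ s, ‖fderiv ℝ f z - φ‖ ≤ η) :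
    ApproximatesLinearOn f φ s (η * C) := by
  intro x hx y hy
  obtain ⟨ℓ, hℓ, h⟩ := hs hy hx
  calc ‖f x - f y - φ (x - y)‖ ≤ η * ℓ := h.norm_image_sub_sub_le hf hφ
    _ ≤ η * (C * dist y x) := mul_le_mul_of_nonneg_left hℓ η.coe_nonneg
    _ = (η * C : ℝ≥0) * ‖x - y‖ := by
      rw [dist_comm, dist_eq_norm, NNReal.coe_mul, mul_assoc]

end IsQuasiconvexSet

lemma isQuasiconvexSet_of_convex (hs : Convex ℝ s) (hC : 1 ≤ C) : IsQuasiconvexSet C s :=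
  fun _ hx _ hy ↦ ⟨_, le_mul_of_one_le_left dist_nonneg (mod_cast hC),
    .of_segment_subset (hs.segment_subset hx hy)⟩

end Quasiconvex

section Preconnected

lemma subset_of_isPreconnected_of_disjoint_frontier {X : Type*} [TopologicalSpace X] {s t : Set X}
    (ht : IsPreconnected t) (hdisj : Disjoint t (frontier s)) (hst : (t ∩ s).Nonempty) : t ⊆ s := by
  have hsplit : t ⊆ interior s ∪ (closure s)ᶜ := fun x hx ↦ by
    by_contra! hx'
    simp only [mem_union, mem_compl_iff, not_or, not_not] at hx'
    exact hdisj.notMem_of_mem_left hx ⟨hx'.2, hx'.1⟩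
  have hmeet : (t ∩ interior s).Nonempty := by
    obtain ⟨x, hxt, hxs⟩ := hst
    exact ⟨x, hxt, (hsplit hxt).resolve_right (not_not.mpr (subset_closure hxs))⟩
  have hdisj' : Disjoint (interior s) (closure s)ᶜ :=
    disjoint_compl_right_iff_subset.mpr (interior_subset.trans subset_closure)
  exact (ht.subset_left_of_subset_union isOpen_interior isClosed_closure.isOpen_compl hdisj' hsplit
    hmeet).trans interior_subset

lemma eq_of_isPreconnected_of_frontier_subset {X : Type*} [TopologicalSpace X] {s t : Set X}
    (hso : IsOpen s) (hs : IsPreconnected s) (ht : IsPreconnected t)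
    (hdisj : Disjoint t (frontier s)) (hfr : frontier t ⊆ frontier s) (hst : (s ∩ t).Nonempty) :
    s = t :=
  have hsfr : Disjoint s (frontier s) := (disjoint_frontier_iff_isOpen.mpr hso).symm
  (subset_of_isPreconnected_of_disjoint_frontier hs (hsfr.mono_right hfr) hst).antisymm
    (subset_of_isPreconnected_of_disjoint_frontier ht hdisj (inter_comm s t ▸ hst))

variable {E : Type*} [NormedAddCommGroup E] [InnerProductSpace ℝ E]

lemma convex_of_isPreconnected_of_rank_le_one (hE : Module.rank ℝ E ≤ 1) {s : Set E}
    (hs : IsPreconnected s) : Convex ℝ s := by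
  obtain ⟨v, hv⟩ := rank_le_one_iff.mp hE
  have hinj : Function.Injective (innerSL ℝ v) := by
    refine (injective_iff_map_eq_zero _).mpr fun x hx ↦ ?_
    obtain ⟨a, rfl⟩ := hv x
    rw [innerSL_apply_apply, inner_smul_right, mul_eq_zero, inner_self_eq_zero] at hx
    rcases hx with rfl | rfl <;> simp
  rw [← preimage_image_eq s hinj]
  exact (hs.image _ (innerSL ℝ v).continuous.continuousOn).convex.linear_preimage
    (innerSL ℝ v : E →ₗ[ℝ] ℝ)

lemma exists_norm_eq_one_inner_eq_zero_of_one_lt_rank (hE : 1 < Module.rank ℝ E) (x : E) :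
    ∃ v : E, ‖v‖ = 1 ∧ inner ℝ x v = 0 := by
  have hspan : (ℝ ∙ x)ᗮ ≠ ⊥ := by
    rw [Ne, Submodule.orthogonal_eq_bot_iff]
    exact fun h ↦ hE.not_ge (rank_le_one_iff.mpr
      ⟨x, fun y ↦ Submodule.mem_span_singleton.mp (h ▸ Submodule.mem_top)⟩)
  obtain ⟨v, hv, hv0⟩ := Submodule.exists_mem_ne_zero_of_ne_bot hspan
  refine ⟨normalize v, norm_normalize_eq_one_iff.mpr hv0, ?_⟩
  rw [NormedSpace.normalize, real_inner_smul_right,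
    Submodule.mem_orthogonal_singleton_iff_inner_right.mp hv, mul_zero]

end Preconnected

section GaugeLevelSets

variable {E : Type*} [NormedAddCommGroup E]

lemma PolylineJoined.radial_detour [NormedSpace ℝ E] {S : Set E} {x y : E} {s : ℝ}
    (hx : segment ℝ x (s • x) ⊆ S) (hxy : segment ℝ (s • x) (s • y) ⊆ S)
    (hy : segment ℝ y (s • y) ⊆ S) :
    PolylineJoined S (|1 - s| * (‖x‖ + ‖y‖) + |s| * dist x y) x y := by
  have hleg (z : E) : dist z (s • z) = |1 - s| * ‖z‖ := by
    rw [dist_eq_norm, ← Real.norm_eq_abs, ← norm_smul, sub_smul, one_smul]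
  have hpath := ((PolylineJoined.of_segment_subset hx).trans (.of_segment_subset hxy)).trans
    (.of_segment_subset (segment_symm ℝ y (s • y) ▸ hy))
  rw [dist_comm (s • y), hleg, hleg, dist_smul₀, Real.norm_eq_abs] at hpath
  convert hpath using 1
  ring

section InnerProductSpace

variable [InnerProductSpace ℝ E] {r ρ : ℝ} {x y : E}

lemma segment_subset_of_norm_eq_of_inner_nonneg (hr : 2 * r ^ 2 < ρ ^ 2) (hx : ‖x‖ = ρ)
    (hy : ‖y‖ = ρ) (hxy : 0 ≤ inner ℝ x y) : segment ℝ x y ⊆ {z | r < ‖z‖} := by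
  rintro _ ⟨a, b, ha, hb, hab, rfl⟩
  refine lt_of_pow_lt_pow_left₀ 2 (norm_nonneg _) ?_
  have hnorm : ‖a • x + b • y‖ ^ 2 = a ^ 2 * ρ ^ 2 + 2 * (a * b * inner ℝ x y) + b ^ 2 * ρ ^ 2 := by
    rw [norm_add_sq_real, norm_smul, norm_smul, real_inner_smul_left, real_inner_smul_right, hx, hy,
      Real.norm_of_nonneg ha, Real.norm_of_nonneg hb]
    ring
  have hinner : 0 ≤ a * b * inner ℝ x y := by positivity
  have hsq : 1 ≤ 2 * (a ^ 2 + b ^ 2) := by nlinarith [sq_nonneg (a - b)]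
  nlinarith [mul_le_mul_of_nonneg_right hsq (sq_nonneg ρ)]

lemma exists_polylineJoined_of_norm_eq (hE : 1 < Module.rank ℝ E) (hr : 2 * r ^ 2 < ρ ^ 2)
    (hx : ‖x‖ = ρ) (hy : ‖y‖ = ρ) : ∃ ℓ ≤ 4 * ρ, PolylineJoined {z | r < ‖z‖} ℓ x y := by
  obtain ⟨v, hv, hxv, hyv⟩ : ∃ v : E, ‖v‖ = ρ ∧ inner ℝ x v = 0 ∧ 0 ≤ inner ℝ v y := by
    obtain ⟨u, hu, hxu⟩ := exists_norm_eq_one_inner_eq_zero_of_one_lt_rank hE x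
    have hρ : ‖ρ‖ = ρ := by rw [← hx, norm_norm]
    rcases le_total 0 (inner ℝ (ρ • u) y) with h | h
    · exact ⟨ρ • u, by rw [norm_smul, hu, hρ, mul_one], by simp [inner_smul_right, hxu], h⟩
    · exact ⟨-(ρ • u), by rw [norm_neg, norm_smul, hu, hρ, mul_one],
        by simp [inner_smul_right, hxu], by simpa using h⟩
  refine ⟨_, ?_, (PolylineJoined.of_segment_subset
    (segment_subset_of_norm_eq_of_inner_nonneg hr hx hv hxv.ge)).trans
    (.of_segment_subset (segment_subset_of_norm_eq_of_inner_nonneg hr hv hy hyv))⟩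
  linarith [dist_le_norm_add_norm x v, dist_le_norm_add_norm v y]

end InnerProductSpace

namespace IsLipschitzGauge

variable {K : ℝ≥0} {N : E → ℝ} {c s : ℝ} {x y : E}

section NormedSpace

variable [NormedSpace ℝ E]

lemma segment_smul_subset_sublevel (hN : IsLipschitzGauge K N) (hx : N x < c) (hs₀ : 0 ≤ s)
    (hs₁ : s ≤ 1) : segment ℝ x (s • x) ⊆ {z | N z < c} := by
  rintro _ ⟨a, b, ha, hb, hab, rfl⟩
  rw [smul_smul, ← add_smul, mem_ofPred_eq, hN.map_smul_of_nonneg _ _ (by positivity)]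
  have hle : a + b * s ≤ 1 := by nlinarith
  exact (mul_le_of_le_one_left (hN.nonneg x) hle).trans_lt hx

lemma segment_smul_subset_superlevel (hN : IsLipschitzGauge K N) (hx : c < N x) (hs : 1 ≤ s) :
    segment ℝ x (s • x) ⊆ {z | c < N z} := by
  rintro _ ⟨a, b, _, hb, hab, rfl⟩
  have hle : 1 ≤ a + b * s := by nlinarith
  rw [smul_smul, ← add_smul, mem_ofPred_eq, hN.map_smul_of_nonneg _ _ (zero_le_one.trans hle)]
  exact hx.trans_le (le_mul_of_one_le_left (hN.nonneg x) hle)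

lemma abs_sub_mul_le_of_mem_segment (hN : IsLipschitzGauge K N) (hs : 0 ≤ s) {z : E}
    (hz : z ∈ segment ℝ (s • x) (s • y)) : |N z - s * N x| ≤ s * (K * dist x y) := by
  rw [← hN.map_smul_of_nonneg s x hs, ← Real.dist_eq]
  calc dist (N z) (N (s • x)) ≤ K * dist z (s • x) := hN.lipschitz.dist_le_mul _ _
    _ ≤ K * dist (s • x) (s • y) := by
      gcongr
      rw [dist_comm, dist_eq_norm, dist_eq_norm, norm_sub_rev, norm_sub_rev (s • x)]
      exact norm_sub_le_of_mem_segment hz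
    _ = s * (K * dist x y) := by rw [dist_smul₀, Real.norm_of_nonneg hs]; ring

/-- Shrinking the chord from `x` to `y` by the factor `c / (c + K * dist x y)` pushes it below
level `c`. -/
lemma isQuasiconvexSet_sublevel (hN : IsLipschitzGauge K N) (c : ℝ) :
    IsQuasiconvexSet (2 * K + 1) {x | N x < c} := by
  intro x hx y hy
  have hc : 0 < c := (hN.nonneg x).trans_lt hx
  set e := K * dist x y with he
  have he₀ : 0 ≤ e := by positivity
  set s := c / (c + e)
  have hs₀ : 0 < s := by positivity
  have hs₁ : s ≤ 1 := div_le_one_of_le₀ (by linarith) (by positivity)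
  have hsce : s * (c + e) = c := div_mul_cancel₀ c (by positivity)
  have hchord : segment ℝ (s • x) (s • y) ⊆ {z | N z < c} := fun z hz ↦
    calc N z ≤ s * N x + s * e := by
          linarith [(abs_le.mp (hN.abs_sub_mul_le_of_mem_segment hs₀.le hz)).2]
      _ < s * c + s * e := by gcongr; exact hx
      _ = c := by rw [← mul_add, hsce]
  refine ⟨_, ?_, .radial_detour (hN.segment_smul_subset_sublevel hx hs₀.le hs₁) hchord
    (hN.segment_smul_subset_sublevel hy hs₀.le hs₁)⟩
  rw [abs_of_nonneg (sub_nonneg.mpr hs₁), abs_of_pos hs₀]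
  calc (1 - s) * (‖x‖ + ‖y‖) + s * dist x y ≤ (1 - s) * (c + c) + 1 * dist x y := by
        gcongr
        · exact (hN.norm_le x).trans hx.le
        · exact (hN.norm_le y).trans hy.le
    _ = 2 * (s * e) + dist x y := by linear_combination (-2 : ℝ) * hsce
    _ ≤ 2 * (1 * e) + dist x y := by gcongr
    _ = (2 * K + 1 : ℝ≥0) * dist x y := by push_cast; rw [he]; ring

lemma exists_polylineJoined_superlevel_of_two_mul_le (hN : IsLipschitzGauge K N) (hc : 0 ≤ c)
    (hx : c < N x) (hy : c < N y) (hxy : 2 * (K * dist x y) ≤ N x) :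
    ∃ ℓ ≤ (4 * K + 3) * dist x y, PolylineJoined {z | c < N z} ℓ x y := by
  have hNx : 0 < N x := hc.trans_lt hx
  set e := K * dist x y with he
  have he₀ : 0 ≤ e := by positivity
  set τ := 2 * e / N x
  have hτ₀ : 0 ≤ τ := by positivity
  have hτ₁ : τ ≤ 1 := div_le_one_of_le₀ hxy hNx.le
  have hτN : τ * N x = 2 * e := div_mul_cancel₀ _ hNx.ne'
  have hchord : segment ℝ ((1 + τ) • x) ((1 + τ) • y) ⊆ {z | c < N z} := fun z hz ↦
    calc c < N x := hx
      _ ≤ N x + (1 - τ) * e := le_add_of_nonneg_right (mul_nonneg (sub_nonneg.mpr hτ₁) he₀)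
      _ = (1 + τ) * N x - (1 + τ) * e := by linear_combination -hτN
      _ ≤ N z := by
        linarith [(abs_le.mp (hN.abs_sub_mul_le_of_mem_segment (by positivity) hz)).1]
  refine ⟨_, ?_, .radial_detour (hN.segment_smul_subset_superlevel hx (by linarith)) hchord
    (hN.segment_smul_subset_superlevel hy (by linarith))⟩
  have hynorm : ‖y‖ ≤ ‖x‖ + dist x y := by
    rw [dist_eq_norm]
    exact norm_le_norm_add_norm_sub x y
  rw [sub_add_cancel_left, abs_neg, abs_of_nonneg hτ₀, abs_of_nonneg (by positivity)]
  calc τ * (‖x‖ + ‖y‖) + (1 + τ) * dist x y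
      ≤ τ * (N x + (N x + dist x y)) + (1 + τ) * dist x y := by
        gcongr
        · exact hN.norm_le x
        · exact hynorm.trans (by gcongr; exact hN.norm_le x)
    _ = 4 * e + (1 + 2 * τ) * dist x y := by linear_combination 2 * hτN
    _ ≤ 4 * e + (1 + 2 * 1) * dist x y := by gcongr
    _ = (4 * K + 3) * dist x y := by rw [he]; ring

lemma exists_norm_eq_segment_subset_superlevel (hN : IsLipschitzGauge K N) (hc : 0 ≤ c)
    (hx : c < N x) {ρ : ℝ} (hρ : ‖x‖ ≤ ρ) : ∃ x', ‖x'‖ = ρ ∧ segment ℝ x x' ⊆ {z | c < N z} := by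
  have hx₀ : 0 < ‖x‖ := norm_pos_iff.mpr fun h ↦ by
    rw [h, hN.map_zero] at hx
    exact hc.not_gt hx
  refine ⟨(ρ / ‖x‖) • x, ?_, hN.segment_smul_subset_superlevel hx ((one_le_div₀ hx₀).mpr hρ)⟩
  rw [norm_smul, Real.norm_of_nonneg (div_nonneg (hx₀.le.trans hρ) hx₀.le),
    div_mul_cancel₀ _ hx₀.ne']

end NormedSpace

section InnerProductSpace

variable [InnerProductSpace ℝ E]

lemma exists_polylineJoined_superlevel_of_lt_two_mul (hE : 1 < Module.rank ℝ E)
    (hN : IsLipschitzGauge K N) (hc : 0 ≤ c) (hx : c < N x) (hy : c < N y)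
    (hxy : N x < 2 * (K * dist x y)) :
    ∃ ℓ ≤ (32 * K + 16) * dist x y, PolylineJoined {z | c < N z} ℓ x y := by
  set ρ := (2 * (2 * K + 1)) * dist x y with hρ
  have hd : 0 ≤ dist x y := dist_nonneg
  have hxρ : ‖x‖ ≤ ρ := by linarith [hN.norm_le x]
  have hyρ : ‖y‖ ≤ ρ := by
    have := norm_le_norm_add_norm_sub x y
    rw [← dist_eq_norm] at this
    linarith [hN.norm_le x]
  have hcρ : 2 * c ^ 2 < ρ ^ 2 := by nlinarith
  obtain ⟨x', hx', hxx'⟩ := hN.exists_norm_eq_segment_subset_superlevel hc hx hxρ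
  obtain ⟨y', hy', hyy'⟩ := hN.exists_norm_eq_segment_subset_superlevel hc hy hyρ
  obtain ⟨ℓ, hℓ, hsphere⟩ := exists_polylineJoined_of_norm_eq hE hcρ hx' hy'
  have hpath := ((PolylineJoined.of_segment_subset hxx').trans
    (hsphere.mono fun z hz ↦ lt_of_lt_of_le hz (hN.norm_le z))).trans
    (.of_segment_subset (segment_symm ℝ y y' ▸ hyy'))
  refine ⟨_, ?_, hpath⟩
  have hdx := dist_le_norm_add_norm x x'
  have hdy := dist_le_norm_add_norm y' y
  calc dist x x' + ℓ + dist y' y ≤ 8 * ρ := by linarith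
    _ = (32 * K + 16) * dist x y := by rw [hρ]; ring

lemma isQuasiconvexSet_superlevel (hE : 1 < Module.rank ℝ E) (hN : IsLipschitzGauge K N)
    (hc : 0 ≤ c) : IsQuasiconvexSet (32 * K + 16) {x | c < N x} := by
  intro x hx y hy
  rcases le_or_gt (2 * (K * dist x y)) (N x) with h | h
  · obtain ⟨ℓ, hℓ, hpath⟩ := hN.exists_polylineJoined_superlevel_of_two_mul_le hc hx hy h
    have hle : (4 * K + 3 : ℝ) ≤ 32 * K + 16 := by linarith [K.coe_nonneg]
    exact ⟨ℓ, hℓ.trans (mul_le_mul_of_nonneg_right (mod_cast hle) dist_nonneg), hpath⟩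
  · exact mod_cast hN.exists_polylineJoined_superlevel_of_lt_two_mul hE hc hx hy h

lemma isQuasiconvexSet_of_frontier_eq (hN : IsLipschitzGauge K N) (hc : 0 ≤ c) {Ω : Set E} {p : E}
    (hΩ : IsOpen Ω) (hΩconn : IsPreconnected Ω) (hfr : frontier Ω = {x | N (x - p) = c}) :
    IsQuasiconvexSet (32 * K + 16) Ω := by
  have hNcont : Continuous fun x ↦ N (x - p) :=
    hN.lipschitz.continuous.comp (continuous_sub_right p)
  have hone : 1 ≤ 32 * K + 16 := le_add_left (by norm_num)
  rcases le_or_gt (Module.rank ℝ E) 1 with hE | hE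
  · exact isQuasiconvexSet_of_convex (convex_of_isPreconnected_of_rank_le_one hE hΩconn) hone
  rcases Ω.eq_empty_or_nonempty with rfl | ⟨x, hx⟩
  · exact isQuasiconvexSet_of_convex convex_empty hone
  have hlevel {S : Set E} (hS : IsQuasiconvexSet (32 * K + 16) S) (hxS : x - p ∈ S)
      (hSc : ∀ z ∈ S, N z ≠ c) (hSfr : frontier ((· - p) ⁻¹' S) ⊆ {y | N (y - p) = c}) :
      IsQuasiconvexSet (32 * K + 16) Ω := by
    have htranslate : (p + ·) '' S = (· - p) ⁻¹' S := by
      simp only [Set.image_add_left, neg_add_eq_sub]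
    have hS' := htranslate ▸ hS.image_add_left p
    rwa [eq_of_isPreconnected_of_frontier_subset hΩ hΩconn hS'.isPreconnected
      (disjoint_left.mpr fun y hy hyfr ↦ hSc _ hy (hfr ▸ hyfr :)) (hfr ▸ hSfr) ⟨x, hx, hxS⟩]
  rcases lt_trichotomy (N (x - p)) c with h | h | h
  · have hle : 2 * K + 1 ≤ 32 * K + 16 := by gcongr <;> norm_num
    exact hlevel ((hN.isQuasiconvexSet_sublevel c).mono_const hle) h (fun _ h ↦ h.ne)
      (frontier_lt_subset_eq hNcont continuous_const)
  · exact absurd (hfr ▸ h : x ∈ frontier Ω)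
      ((disjoint_frontier_iff_isOpen.mpr hΩ).notMem_of_mem_right hx)
  · exact hlevel (hN.isQuasiconvexSet_superlevel hE hc) h (fun _ h ↦ h.ne')
      ((frontier_lt_subset_eq continuous_const hNcont).trans fun _ h ↦ h.symm)

end InnerProductSpace

end IsLipschitzGauge

end GaugeLevelSets

section RadialProfile

/-- A Lipschitz function whose restriction to every ray from the origin grows so fast that each of
its positive level sets is the radial graph of a Lipschitz function. The parameters are the
Lipschitz constant `k`, the constant `Λ` bounding the norm by `P`, and the rate `α` of growth under
dilation. -/
structure IsRadialProfile {E : Type*} [NormedAddCommGroup E] [Module ℝ E] (k Λ : ℝ≥0) (α : ℝ)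
    (P : E → ℝ) : Prop where
  lipschitz : LipschitzWith k P
  map_zero : P 0 = 0
  norm_le : ∀ y, ‖y‖ ≤ Λ * P y
  growth : ∀ (y : E) (t : ℝ), 1 ≤ t → (1 + α * (t - 1)) * P y ≤ P (t • y)

namespace IsRadialProfile

variable {E : Type*} [NormedAddCommGroup E] [NormedSpace ℝ E] {k Λ : ℝ≥0} {α c a b : ℝ} {P : E → ℝ}
  {θ ψ : E}

lemma le_mul_norm (hP : IsRadialProfile k Λ α P) (y : E) : P y ≤ k * ‖y‖ := by
  have h := hP.lipschitz.dist_le_mul y 0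
  rw [hP.map_zero, dist_zero_right, dist_zero_right] at h
  exact (Real.le_norm_self _).trans h

lemma exists_pos_smul_eq (hP : IsRadialProfile k Λ α P) (hc : 0 < c) (hθ : ‖θ‖ = 1) :
    ∃ a : ℝ, 0 < a ∧ P (a • θ) = c := by
  have hΛ : (0 : ℝ) < Λ :=
    Λ.coe_nonneg.lt_of_ne fun h ↦ by have := hP.norm_le θ; rw [hθ, ← h] at this; linarith
  have htop : c ≤ P ((Λ * c) • θ) := by
    have h := hP.norm_le ((Λ * c) • θ)
    rw [norm_smul, hθ, mul_one, Real.norm_of_nonneg (by positivity)] at h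
    exact le_of_mul_le_mul_left h hΛ
  have hcont : Continuous fun a : ℝ ↦ P (a • θ) :=
    hP.lipschitz.continuous.comp (continuous_id.smul continuous_const)
  obtain ⟨a, ha, hac⟩ := intermediate_value_Icc (by positivity : (0 : ℝ) ≤ Λ * c)
    hcont.continuousOn ⟨by simp [hP.map_zero, hc.le], htop⟩
  refine ⟨a, ha.1.lt_of_ne ?_, hac⟩
  rintro rfl
  simp [hP.map_zero, hc.ne] at hac

lemma mem_Icc_of_smul_eq (hP : IsRadialProfile k Λ α P) (hθ : ‖θ‖ = 1) (ha : 0 < a)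
    (hac : P (a • θ) = c) : c ≤ k * a ∧ a ≤ Λ * c := by
  have hnorm : ‖a • θ‖ = a := by rw [norm_smul, hθ, mul_one, Real.norm_of_nonneg ha.le]
  exact ⟨hnorm ▸ hac ▸ hP.le_mul_norm (a • θ), hac ▸ hnorm.symm.trans_le (hP.norm_le (a • θ))⟩

lemma mul_sub_le_of_smul_eq (hP : IsRadialProfile k Λ α P) (ha : 0 < a) (hab : a ≤ b)
    (hac : P (a • θ) = c) (hbc : P (b • ψ) = c) :
    α * c * (b - a) ≤ k * (a * b) * ‖θ - ψ‖ := by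
  have hb : 0 < b := ha.trans_le hab
  have hgrowth := hP.growth (a • θ) (b / a) ((one_le_div₀ ha).mpr hab)
  rw [smul_smul, div_mul_cancel₀ b ha.ne', hac] at hgrowth
  have hlip : P (b • θ) ≤ c + k * (b * ‖θ - ψ‖) := by
    have h := hP.lipschitz.dist_le_mul (b • θ) (b • ψ)
    rw [dist_smul₀, Real.norm_of_nonneg hb.le, hbc, Real.dist_eq, dist_eq_norm] at h
    linarith [le_abs_self (P (b • θ) - c)]
  calc α * c * (b - a) = a * ((1 + α * (b / a - 1)) * c - c) := by field_simp; ring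
    _ ≤ a * (k * (b * ‖θ - ψ‖)) := by gcongr; linarith
    _ = k * (a * b) * ‖θ - ψ‖ := by ring

lemma eq_of_smul_eq (hP : IsRadialProfile k Λ α P) (hα : 0 < α) (hc : 0 < c) (ha : 0 < a)
    (hb : 0 < b) (hac : P (a • θ) = c) (hbc : P (b • θ) = c) : a = b := by
  have hle {a b : ℝ} (ha : 0 < a) (hac : P (a • θ) = c) (hbc : P (b • θ) = c) : b ≤ a := by
    by_contra! hab
    have h := hP.mul_sub_le_of_smul_eq ha hab.le hac hbc
    rw [sub_self, norm_zero, mul_zero] at h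
    exact h.not_gt (mul_pos (mul_pos hα hc) (sub_pos.mpr hab))
  exact (hle hb hbc hac).antisymm (hle ha hac hbc)

lemma abs_sub_le_of_smul_eq (hP : IsRadialProfile k Λ α P) (hα : 0 < α) (hc : 0 < c)
    (hθ : ‖θ‖ = 1) (hψ : ‖ψ‖ = 1) (ha : 0 < a) (hb : 0 < b) (hac : P (a • θ) = c)
    (hbc : P (b • ψ) = c) : |a - b| ≤ k * Λ ^ 2 * c / α * dist θ ψ := by
  wlog hab : a ≤ b generalizing a b θ ψ
  · rw [abs_sub_comm, dist_comm]
    exact this hψ hθ hb ha hbc hac (le_of_not_ge hab)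
  rw [abs_sub_comm, abs_of_nonneg (sub_nonneg.mpr hab)]
  refine le_of_mul_le_mul_left ?_ (mul_pos hα hc)
  calc α * c * (b - a) ≤ k * (a * b) * ‖θ - ψ‖ := hP.mul_sub_le_of_smul_eq ha hab hac hbc
    _ ≤ k * ((Λ * c) * (Λ * c)) * ‖θ - ψ‖ := by
      gcongr
      · exact (hP.mem_Icc_of_smul_eq hθ ha hac).2
      · exact (hP.mem_Icc_of_smul_eq hψ hb hbc).2
    _ = α * c * (k * Λ ^ 2 * c / α * dist θ ψ) := by rw [dist_eq_norm]; field_simp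

lemma exists_levelSet_eq_radialGraph (hP : IsRadialProfile k Λ α P) (hα : 0 < α) (hc : 0 < c) :
    ∃ ρ : E → ℝ, {y | P y = c} = {y | ∃ θ ∈ sphere (0 : E) 1, y = ρ θ • θ} ∧
      (∀ θ ∈ sphere (0 : E) 1, ∀ ψ ∈ sphere (0 : E) 1,
        |ρ θ - ρ ψ| ≤ k * Λ ^ 2 * c / α * dist θ ψ) ∧
      ∀ θ ∈ sphere (0 : E) 1, c ≤ k * ρ θ ∧ ρ θ ≤ Λ * c := by
  simp only [mem_sphere_zero_iff_norm]
  have hex (θ : E) (hθ : ‖θ‖ = 1) : ∃ a : ℝ, 0 < a ∧ P (a • θ) = c := hP.exists_pos_smul_eq hc hθ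
  choose! ρ hρ hρc using hex
  refine ⟨ρ, ?_, fun θ hθ ψ hψ ↦ hP.abs_sub_le_of_smul_eq hα hc hθ hψ (hρ θ hθ) (hρ ψ hψ)
    (hρc θ hθ) (hρc ψ hψ), fun θ hθ ↦ hP.mem_Icc_of_smul_eq hθ (hρ θ hθ) (hρc θ hθ)⟩
  ext y
  constructor
  · intro (hy : P y = c)
    have hy₀ : y ≠ 0 := by rintro rfl; exact hc.ne (hP.map_zero.symm.trans hy)
    have hnormalize : ‖normalize y‖ = 1 := norm_normalize_eq_one_iff.mpr hy₀
    refine ⟨normalize y, hnormalize, ?_⟩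
    rw [← hP.eq_of_smul_eq hα hc (norm_pos_iff.mpr hy₀) (hρ _ hnormalize)
      (by rwa [norm_smul_normalize]) (hρc _ hnormalize), norm_smul_normalize]
  · rintro ⟨θ, hθ, rfl⟩
    exact hρc θ hθ

end IsRadialProfile

variable {d : ℕ} {Ω : Set (EuclideanSpace ℝ (Fin (d + 1)))} {p : EuclideanSpace ℝ (Fin (d + 1))}

lemma IsLipschitzGraphDomain.of_frontier_eq_radialGraph {M σ : ℝ} (hσ : 0 < σ) (hΩ : IsOpen Ω)
    (hΩconn : IsConnected Ω) {ρ : EuclideanSpace ℝ (Fin (d + 1)) → ℝ}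
    (hfr : frontier Ω = {x | ∃ θ ∈ sphere 0 1, x - p = ρ θ • θ})
    (hlip : ∀ θ ∈ sphere 0 1, ∀ ψ ∈ sphere 0 1, σ * |ρ θ - ρ ψ| ≤ M * dist θ ψ)
    (hbound : ∀ θ ∈ sphere 0 1, 1 / (1 + M) ≤ σ * ρ θ ∧ σ * ρ θ ≤ 1) :
    IsLipschitzGraphDomain d M Ω := by
  refine ⟨hΩ, hΩconn, σ, .refl ℝ _, -(σ • p), fun θ ↦ σ * ρ θ, hσ, ?_, fun θ hθ ψ hψ ↦ ?_, hbound⟩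
  · let T := (Homeomorph.smulOfNeZero σ hσ.ne').trans (Homeomorph.addRight (-(σ • p)))
    have hT (x) : T x = σ • (x - p) := by rw [smul_sub, sub_eq_add_neg]; rfl
    calc frontier (T '' Ω) = T '' {x | ∃ θ ∈ sphere 0 1, x - p = ρ θ • θ} := by
          rw [← T.image_frontier, hfr]
      _ = {y | ∃ θ ∈ sphere 0 1, y = (σ * ρ θ) • θ} := by
          ext y
          constructor
          · rintro ⟨x, ⟨θ, hθ, hx⟩, rfl⟩
            exact ⟨θ, hθ, by rw [hT, hx, smul_smul]⟩
          · rintro ⟨θ, hθ, rfl⟩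
            exact ⟨ρ θ • θ + p, ⟨θ, hθ, add_sub_cancel_right _ _⟩, by
              rw [hT, add_sub_cancel_right, smul_smul]⟩
  · rw [← mul_sub, abs_mul, abs_of_pos hσ]
    exact hlip θ hθ ψ hψ

lemma IsRadialProfile.isLipschitzGraphDomain_of_frontier_eq {k Λ : ℝ≥0} {α c : ℝ}
    {P : EuclideanSpace ℝ (Fin (d + 1)) → ℝ} (hP : IsRadialProfile k Λ α P) (hα₀ : 0 < α)
    (hα₁ : α ≤ 1) (hc : 0 < c) (hΩ : IsOpen Ω) (hΩconn : IsConnected Ω)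
    (hfr : frontier Ω = {x | P (x - p) = c}) : IsLipschitzGraphDomain d (k * Λ / α) Ω := by
  obtain ⟨ρ, hρ, hlip, hbound⟩ := hP.exists_levelSet_eq_radialGraph hα₀ hc
  obtain ⟨θ₀, hθ₀⟩ := NormedSpace.sphere_nonempty (x := (0 : EuclideanSpace ℝ (Fin (d + 1))))
    |>.mpr zero_le_one
  have hkρ : 0 < k * ρ θ₀ := hc.trans_le (hbound θ₀ hθ₀).1
  have hk : (0 : ℝ) < k := k.coe_nonneg.lt_of_ne' (left_ne_zero_of_mul hkρ.ne')
  have hρ₀ : 0 < ρ θ₀ := (pos_iff_pos_of_mul_pos hkρ).mp hk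
  have hΛ : (0 : ℝ) < Λ := (pos_iff_pos_of_mul_pos (hρ₀.trans_le (hbound θ₀ hθ₀).2)).mpr hc
  set σ := (Λ * c)⁻¹ with hσ
  refine .of_frontier_eq_radialGraph (by positivity : 0 < σ) hΩ hΩconn
    (hfr.trans (congrArg ((· - p) ⁻¹' ·) hρ)) (fun θ hθ ψ hψ ↦ ?_) fun θ hθ ↦ ?_
  · calc σ * |ρ θ - ρ ψ| ≤ σ * (k * Λ ^ 2 * c / α * dist θ ψ) := by
          gcongr; exact hlip θ hθ ψ hψ
      _ = k * Λ / α * dist θ ψ := by rw [hσ]; field_simp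
  · obtain ⟨hcρ, hρΛ⟩ := hbound θ hθ
    constructor
    · calc 1 / (1 + k * Λ / α) ≤ 1 / (k * Λ) := by
            gcongr
            exact (le_div_self (by positivity) hα₀ hα₁).trans (le_add_of_nonneg_left zero_le_one)
        _ = σ * (c / k) := by rw [hσ]; field_simp
        _ ≤ σ * ρ θ := by gcongr; exact (div_le_iff₀' hk).mpr hcρ
    · rw [hσ]
      exact inv_mul_le_one_of_le₀ hρΛ (by positivity)

end RadialProfile

section Perturbation

variable {E F : Type*} [NormedAddCommGroup E] [NormedSpace ℝ E] [NormedAddCommGroup F]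
  [NormedSpace ℝ F] {η D : ℝ≥0}

lemma norm_map_smul_sub_smul_le_of_approximatesLinearOn {f : E → F} {φ : E →L[ℝ] F}
    (hf : ApproximatesLinearOn f φ univ η) (hf₀ : f 0 = 0) {t : ℝ} (ht : 1 ≤ t) (x : E) :
    ‖f (t • x) - t • f x‖ ≤ 2 * η * (t - 1) * ‖x‖ := by
  have ht' : 0 ≤ t - 1 := sub_nonneg.mpr ht
  have hinc : ‖f (t • x) - f x - φ (t • x - x)‖ ≤ η * ((t - 1) * ‖x‖) := by
    have h := hf (t • x) trivial x trivial
    rwa [← norm_smul_of_nonneg ht', sub_smul, one_smul]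
  have hbase : ‖f x - φ x‖ ≤ η * ‖x‖ := by
    simpa [hf₀] using hf x trivial 0 trivial
  calc ‖f (t • x) - t • f x‖
      = ‖(f (t • x) - f x - φ (t • x - x)) - (t - 1) • (f x - φ x)‖ := by
        congr 1
        rw [map_sub, map_smul]
        module
    _ ≤ η * ((t - 1) * ‖x‖) + (t - 1) * (η * ‖x‖) := by
        refine norm_sub_le_of_le hinc ?_
        rw [norm_smul_of_nonneg ht']
        gcongr
    _ = 2 * η * (t - 1) * ‖x‖ := by ring

variable {A : E ≃L[ℝ] F}

lemma norm_sub_le_of_approximatesLinearOn {s : Set E} {f : E → F}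
    (hf : ApproximatesLinearOn f (A : E →L[ℝ] F) s η) (hA : ‖(A.symm : F →L[ℝ] E)‖ ≤ D)
    (hη : 2 * D * η ≤ 1) {x y : E} (hx : x ∈ s) (hy : y ∈ s) :
    ‖x - y‖ ≤ 2 * D * ‖f x - f y‖ := by
  have hAinv : ‖x - y‖ ≤ D * ‖A (x - y)‖ := by
    simpa using (A.symm : F →L[ℝ] E).le_of_opNorm_le hA (A (x - y))
  have hA' : ‖A (x - y)‖ ≤ ‖f x - f y‖ + η * ‖x - y‖ := by
    have h : ‖A (x - y)‖ ≤ ‖f x - f y‖ + ‖f x - f y - A (x - y)‖ := by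
      simpa using norm_sub_le (f x - f y) (f x - f y - A (x - y))
    exact h.trans (by gcongr; exact hf x hx y hy)
  have hη' : (2 * D * η : ℝ) ≤ 1 := mod_cast hη
  nlinarith [mul_le_mul_of_nonneg_left hA' D.coe_nonneg,
    mul_le_mul_of_nonneg_right hη' (norm_nonneg (x - y))]

lemma norm_image_sub_le_of_approximatesLinearOn {s : Set E} {f : E → F} {φ : E →L[ℝ] F}
    (hf : ApproximatesLinearOn f φ s η) (hφ : ‖φ‖ ≤ D) {x y : E} (hx : x ∈ s) (hy : y ∈ s) :
    ‖f x - f y‖ ≤ (D + η) * ‖x - y‖ := by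
  calc ‖f x - f y‖ = ‖φ (x - y) + (f x - f y - φ (x - y))‖ := by rw [add_sub_cancel]
    _ ≤ D * ‖x - y‖ + η * ‖x - y‖ := norm_add_le_of_le (φ.le_of_opNorm_le hφ _) (hf x hx y hy)
    _ = (D + η) * ‖x - y‖ := (add_mul _ _ _).symm

lemma exists_approximatesLinearOn_univ_extension [FiniteDimensional ℝ F] {s : Set E} {f : E → F}
    {φ : E →L[ℝ] F} (hf : ApproximatesLinearOn f φ s η) :
    ∃ h : E → F, EqOn f h s ∧ ApproximatesLinearOn h φ univ (lipschitzExtensionConstant F * η) := by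
  obtain ⟨u, hu, hfu⟩ := hf.lipschitzOnWith.extend_finite_dimension
  refine ⟨φ + u, fun x hx ↦ by simp [← hfu hx], LipschitzOnWith.approximatesLinearOn ?_⟩
  rw [add_sub_cancel_left]
  exact hu.lipschitzOnWith

lemma two_mul_mul_le_one_of_eight_mul_le_one {K : ℝ≥0} (hK : 1 ≤ K) (hη : 8 * K * D * η ≤ 1) :
    2 * D * η ≤ 1 := by
  have h : 2 ≤ 8 * K := (by norm_num : (2 : ℝ≥0) ≤ 8 * 1).trans (by gcongr)
  exact hη.trans' (by gcongr)

lemma exists_homeomorph_approximatesLinearOn_univ [FiniteDimensional ℝ F] {s : Set E} {f : E → F}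
    (hf : ApproximatesLinearOn f (A : E →L[ℝ] F) s η) (hA : ‖(A.symm : F →L[ℝ] E)‖ ≤ D)
    (hη : 2 * D * (lipschitzExtensionConstant F * η) ≤ 1) :
    ∃ h : E ≃ₜ F, EqOn f h s ∧
      ApproximatesLinearOn h (A : E →L[ℝ] F) univ (lipschitzExtensionConstant F * η) := by
  have : FiniteDimensional ℝ E := A.symm.finiteDimensional
  obtain ⟨h, hfh, hh⟩ := exists_approximatesLinearOn_univ_extension hf
  set η' := lipschitzExtensionConstant F * η
  have hsmall : Subsingleton E ∨ η' < ‖(A.symm : F →L[ℝ] E)‖₊⁻¹ := by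
    refine A.subsingleton_or_nnnorm_symm_pos.imp_right fun hpos ↦ ?_
    rw [NNReal.lt_inv_iff_mul_lt hpos.ne']
    calc η' * ‖(A.symm : F →L[ℝ] E)‖₊ ≤ η' * D := by gcongr; exact hA
      _ < 1 := by
        have : 2 * (D * η' : ℝ) ≤ 1 := by rw [← mul_assoc]; exact mod_cast hη
        have hlt : (η' * D : ℝ) < 1 := by linarith
        exact mod_cast hlt
  exact ⟨hh.toHomeomorph h hsmall, hfh, hh⟩

lemma IsLipschitzGauge.mul_le_comp_symm_smul_of_approximatesLinearOn {K : ℝ≥0} {N : E → ℝ}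
    (hN : IsLipschitzGauge K N) {f : E ≃ F} (hf : ApproximatesLinearOn f (A : E →L[ℝ] F) univ η)
    (hf₀ : f 0 = 0) (hinv : LipschitzWith (2 * D) f.symm) (hη : 8 * K * D * η ≤ 1) (y : F) {t : ℝ}
    (ht : 1 ≤ t) : t * N (f.symm y) - (t - 1) / 2 * N (f.symm y) ≤ N (f.symm (t • y)) := by
  obtain ⟨x, rfl⟩ := f.surjective y
  rw [f.symm_apply_apply, sub_le_comm]
  have hdist : dist (t • x) (f.symm (t • f x)) ≤ 2 * D * (2 * η * (t - 1) * ‖x‖) := by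
    have h := hinv.dist_le_mul (f (t • x)) (t • f x)
    rw [f.symm_apply_apply, dist_eq_norm (f _)] at h
    refine h.trans ?_
    push_cast
    gcongr
    exact norm_map_smul_sub_smul_le_of_approximatesLinearOn hf hf₀ ht x
  calc t * N x - N (f.symm (t • f x)) ≤ dist (N (t • x)) (N (f.symm (t • f x))) := by
        rw [← hN.map_smul_of_nonneg t x (zero_le_one.trans ht)]
        exact le_abs_self _
    _ ≤ K * (2 * D * (2 * η * (t - 1) * ‖x‖)) :=
        (hN.lipschitz.dist_le_mul _ _).trans (by gcongr)
    _ = (8 * K * D * η : ℝ≥0) * ((t - 1) / 2 * ‖x‖) := by push_cast; ring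
    _ ≤ 1 * ((t - 1) / 2 * N x) := by
        have : 0 ≤ t - 1 := sub_nonneg.mpr ht
        gcongr
        · exact mod_cast hη
        · exact hN.norm_le x
    _ = (t - 1) / 2 * N x := one_mul _

lemma IsLipschitzGauge.isRadialProfile_comp_symm {K : ℝ≥0} {N : E → ℝ} (hN : IsLipschitzGauge K N)
    (hK : 1 ≤ K) (hD : 1 ≤ D) {f : E ≃ F} (hf : ApproximatesLinearOn f (A : E →L[ℝ] F) univ η)
    (hf₀ : f 0 = 0) (hA : ‖(A : E →L[ℝ] F)‖ ≤ D) (hA' : ‖(A.symm : F →L[ℝ] E)‖ ≤ D)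
    (hη : 8 * K * D * η ≤ 1) : IsRadialProfile (2 * K * D) (2 * D) (1 / 2) (N ∘ f.symm) := by
  have hDη : 2 * D * η ≤ 1 := two_mul_mul_le_one_of_eight_mul_le_one hK hη
  have hηD : η ≤ D := calc
    η ≤ 8 * K * D * η := le_mul_of_one_le_left' <|
      one_le_mul (one_le_mul (by norm_num) hK) hD
    _ ≤ D := hη.trans hD
  have hinv : LipschitzWith (2 * D) f.symm := LipschitzWith.of_dist_le_mul fun y z ↦ by
    simpa [dist_eq_norm] using norm_sub_le_of_approximatesLinearOn hf hA' hDη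
      (mem_univ (f.symm y)) (mem_univ (f.symm z))
  constructor
  · exact (hN.lipschitz.comp hinv).weaken (by rw [mul_left_comm, mul_assoc])
  · rw [Function.comp_apply, f.symm_apply_eq.mpr hf₀.symm, hN.map_zero]
  · intro y
    have h := norm_image_sub_le_of_approximatesLinearOn hf hA (mem_univ (f.symm y)) (mem_univ 0)
    rw [hf₀, f.apply_symm_apply, sub_zero, sub_zero] at h
    calc ‖y‖ ≤ (D + η) * ‖f.symm y‖ := h
      _ ≤ (D + D) * N (f.symm y) := by gcongr; exact hN.norm_le _
      _ = (2 * D : ℝ≥0) * N (f.symm y) := by push_cast; ring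
  · intro y t ht
    have h := hN.mul_le_comp_symm_smul_of_approximatesLinearOn hf hf₀ hinv hη y ht
    rw [Function.comp_apply, Function.comp_apply]
    linarith

lemma IsLipschitzGauge.exists_isRadialProfile_frontier_image {K : ℝ≥0} {N : E → ℝ}
    (hN : IsLipschitzGauge K N) (hK : 1 ≤ K) (hD : 1 ≤ D) {h : E ≃ₜ F}
    (hh : ApproximatesLinearOn h (A : E →L[ℝ] F) univ η) (hA : ‖(A : E →L[ℝ] F)‖ ≤ D)
    (hA' : ‖(A.symm : F →L[ℝ] E)‖ ≤ D) (hη : 8 * K * D * η ≤ 1) {Ω : Set E} {p : E} {c : ℝ}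
    (hfr : frontier Ω = {x | N (x - p) = c}) :
    ∃ P : F → ℝ, IsRadialProfile (2 * K * D) (2 * D) (1 / 2) P ∧
      frontier (h '' Ω) = {y | P (y - h p) = c} := by
  let f : E ≃ F := ((Equiv.addLeft p).trans h.toEquiv).trans (Equiv.subRight (h p))
  have hf : ApproximatesLinearOn f (A : E →L[ℝ] F) univ η := by
    intro x _ y _
    simpa [f] using hh (p + x) trivial (p + y) trivial
  have hf₀ : f 0 = 0 := by simp [f]
  refine ⟨N ∘ f.symm, hN.isRadialProfile_comp_symm hK hD hf hf₀ hA hA' hη, ?_⟩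
  rw [← h.image_frontier, hfr, h.image_eq_preimage_symm]
  ext y
  have hsymm : f.symm (y - h p) = h.symm y - p := f.symm_apply_eq.mpr (by simp [f])
  rw [mem_preimage, mem_ofPred_eq, mem_ofPred_eq, Function.comp_apply, hsymm]

end Perturbation

section Derivative

open Filter Topology

variable {E F : Type*} [NormedAddCommGroup E] [NormedSpace ℝ E] [NormedAddCommGroup F]
  [NormedSpace ℝ F] {f : E → F} {f' : E →L[ℝ] F} {x : E} {c : ℝ}

lemma mul_norm_le_norm_apply_of_hasFDerivAt (hf : HasFDerivAt f f' x)
    (hc : ∀ᶠ y in 𝓝 x, c * dist y x ≤ dist (f y) (f x)) (v : E) : c * ‖v‖ ≤ ‖f' v‖ := by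
  have hcont : Tendsto (fun t : ℝ ↦ x + t⁻¹ • v) atTop (𝓝 x) := by
    simpa using (tendsto_const_nhds (x := x)).add ((tendsto_inv_atTop_zero (𝕜 := ℝ)).smul_const v)
  refine ge_of_tendsto (hf.lim_real v).norm ?_
  filter_upwards [hcont.eventually hc, eventually_gt_atTop 0] with t hct ht
  rw [dist_self_add_left, norm_smul_of_nonneg (inv_nonneg.mpr ht.le), dist_eq_norm] at hct
  calc c * ‖v‖ = t * (c * (t⁻¹ * ‖v‖)) := by field_simp
    _ ≤ t * ‖f (x + t⁻¹ • v) - f x‖ := by gcongr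
    _ = ‖t • (f (x + t⁻¹ • v) - f x)‖ := (norm_smul_of_nonneg ht.le _).symm

lemma norm_le_and_norm_symm_le_of_hasFDerivAt [Nontrivial E] {A : E ≃L[ℝ] F}
    (hf : HasFDerivAt f (A : E →L[ℝ] F) x)
    (hc : ∀ᶠ y in 𝓝 x, c⁻¹ * dist y x ≤ dist (f y) (f x) ∧ dist (f y) (f x) ≤ c * dist y x) :
    ‖(A : E →L[ℝ] F)‖ ≤ c ∧ ‖(A.symm : F →L[ℝ] E)‖ ≤ c := by
  have : NeBot (𝓝[≠] x) := Module.punctured_nhds_neBot ℝ E x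
  obtain ⟨y, ⟨-, hy⟩, hyx : y ≠ x⟩ :=
    ((hc.filter_mono nhdsWithin_le_nhds).and (self_mem_nhdsWithin (s := {x}ᶜ))).exists
  have hc₀ : 0 ≤ c := nonneg_of_mul_nonneg_left (dist_nonneg.trans hy) (dist_pos.mpr hyx)
  have hA : ‖(A : E →L[ℝ] F)‖ ≤ c := hf.le_of_lip' hc₀ <| hc.mono fun y hy ↦ by
    simpa only [dist_eq_norm] using hy.2
  have hc_pos : 0 < c := A.norm_pos.trans_le hA
  refine ⟨hA, ContinuousLinearMap.opNorm_le_bound _ hc₀ fun y ↦ ?_⟩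
  rw [← inv_mul_le_iff₀ hc_pos]
  simpa using mul_norm_le_norm_apply_of_hasFDerivAt hf (hc.mono fun _ ↦ And.left) (A.symm y)

lemma norm_sub_le_of_norm_comp_symm_sub_id_le {φ : E →L[ℝ] F} {A : E ≃L[ℝ] F} {δ D : ℝ}
    (hφ : ‖φ.comp (A.symm : F →L[ℝ] E) - .id ℝ F‖ ≤ δ) (hA : ‖(A : E →L[ℝ] F)‖ ≤ D) :
    ‖φ - A‖ ≤ δ * D := by
  have h : φ - A = (φ.comp (A.symm : F →L[ℝ] E) - .id ℝ F).comp (A : E →L[ℝ] F) := by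
    ext v
    simp
  rw [h]
  exact (ContinuousLinearMap.opNorm_comp_le _ _).trans <|
    mul_le_mul hφ hA (norm_nonneg _) ((norm_nonneg _).trans hφ)

end Derivative

section Image

variable {d : ℕ} {Ω : Set (EuclideanSpace ℝ (Fin (d + 1)))}
  {g : EuclideanSpace ℝ (Fin (d + 1)) → EuclideanSpace ℝ (Fin (d + 1))}
  {A : EuclideanSpace ℝ (Fin (d + 1)) ≃L[ℝ] EuclideanSpace ℝ (Fin (d + 1))} {K D ε : ℝ≥0}

lemma IsLipschitzGauge.isLipschitzGraphDomain_image {N : EuclideanSpace ℝ (Fin (d + 1)) → ℝ}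
    (hN : IsLipschitzGauge K N) (hK : 1 ≤ K) (hD : 1 ≤ D) {p : EuclideanSpace ℝ (Fin (d + 1))}
    {c : ℝ} (hc : 0 < c) (hΩ : IsOpen Ω) (hΩconn : IsConnected Ω)
    (hfr : frontier Ω = {x | N (x - p) = c})
    (hg : ApproximatesLinearOn g A.toContinuousLinearMap Ω ε)
    (hA : ‖A.toContinuousLinearMap‖ ≤ D) (hA' : ‖A.symm.toContinuousLinearMap‖ ≤ D)
    (hε : 8 * K * D * (lipschitzExtensionConstant (EuclideanSpace ℝ (Fin (d + 1))) * ε) ≤ 1) :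
    IsLipschitzGraphDomain d (8 * K * D ^ 2) (g '' Ω) := by
  obtain ⟨h, hgh, hh⟩ := exists_homeomorph_approximatesLinearOn_univ hg hA'
    (two_mul_mul_le_one_of_eight_mul_le_one hK hε)
  obtain ⟨P, hP, hfrP⟩ := hN.exists_isRadialProfile_frontier_image hK hD hh hA hA' hε hfr
  rw [hgh.image_eq]
  convert hP.isLipschitzGraphDomain_of_frontier_eq one_half_pos (by norm_num) hc
    (h.isOpenMap Ω hΩ) (hΩconn.image h h.continuous.continuousOn) hfrP using 1
  push_cast
  ring

end Image

theorem image_lipschitz_graph_domain_of_slowly_varying_derivative_general (d : ℕ) (L₀ L : ℝ) :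
    ∃ L₁ δ₀ : ℝ, 0 < L₁ ∧ 0 < δ₀ ∧
      ∀ (Ω : Set (EuclideanSpace ℝ (Fin (d + 1))))
        (g : EuclideanSpace ℝ (Fin (d + 1)) → EuclideanSpace ℝ (Fin (d + 1))) (δ : ℝ)
        (A : EuclideanSpace ℝ (Fin (d + 1)) ≃L[ℝ] EuclideanSpace ℝ (Fin (d + 1))),
        IsLipschitzGraphDomain d L₀ Ω → δ < δ₀ → DifferentiableOn ℝ g Ω →
        ‖A.toContinuousLinearMap‖ ≤ L → ‖A.symm.toContinuousLinearMap‖ ≤ L →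
        (∀ z ∈ Ω,
          ‖(fderiv ℝ g z).comp A.symm.toContinuousLinearMap - ContinuousLinearMap.id ℝ _‖ ≤ δ) →
        IsLipschitzGraphDomain d L₁ (g '' Ω) := by
  set K := graphGaugeConst L₀.toNNReal
  set D := L.toNNReal + 1
  set κ := lipschitzExtensionConstant (EuclideanSpace ℝ (Fin (d + 1)))
  set δ₀ : ℝ≥0 := (8 * K * D * (κ * (D * (32 * K + 16))))⁻¹
  have hK : 1 ≤ K := one_le_graphGaugeConst _
  have hD : 1 ≤ D := le_add_self
  have : 0 < K := zero_lt_one.trans_le hK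
  have : 0 < D := zero_lt_one.trans_le hD
  have hLD : L ≤ D := (Real.le_coe_toNNReal L).trans (by simp [D])
  have hκ : 0 < κ := lipschitzExtensionConstant_pos _
  have hδ₀ : 0 < δ₀ := by positivity
  refine ⟨8 * K * D ^ 2, δ₀, by positivity, hδ₀, fun Ω g δ A hΩ hδ hg hA hA' hvar ↦ ?_⟩
  obtain ⟨N, p, c, hN, hc, hfr⟩ := hΩ.exists_gauge
  have hclose (z) (hz : z ∈ Ω) : ‖fderiv ℝ g z - A‖ ≤ (δ₀ * D : ℝ≥0) :=
    (norm_sub_le_of_norm_comp_symm_sub_id_le ((hvar z hz).trans hδ.le) (hA.trans hLD)).trans_eq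
      (NNReal.coe_mul _ _).symm
  have happrox : ApproximatesLinearOn g A.toContinuousLinearMap Ω (δ₀ * D * (32 * K + 16)) :=
    (hN.isQuasiconvexSet_of_frontier_eq hc.le hΩ.1 hΩ.2.1.isPreconnected hfr).approximatesLinearOn
      (fun z hz ↦ hg.differentiableAt (hΩ.1.mem_nhds hz)) hclose
  refine hN.isLipschitzGraphDomain_image hK hD hc hΩ.1 hΩ.2.1 hfr happrox (hA.trans hLD)
    (hA'.trans hLD) (le_of_eq ?_)
  calc 8 * K * D * (κ * (δ₀ * D * (32 * K + 16)))
      = δ₀ * (8 * K * D * (κ * (D * (32 * K + 16)))) := by ring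
    _ = 1 := inv_mul_cancel₀ (by positivity)

/-- **Proposition `p:slow-vary-lip-graph`**: if `Ω` is an `L₀`-Lipschitz graph domain,
`g` is a `C¹`, `L`-bi-Lipschitz map on a neighborhood of `Ω` with everywhere invertible
derivative satisfying `‖Dg(z) ∘ Dg(w)⁻¹ - I‖ ≤ δ` on `Ω` for some `δ < δ₀(L₀,L,d)`, then
`g(Ω)` is an `L₁(L₀,L,d)`-Lipschitz graph domain. -/
theorem image_lipschitz_graph_domain_of_slowly_varying_derivative (d : ℕ) (L₀ L : ℝ) :
    ∃ L₁ δ₀ : ℝ, 0 < L₁ ∧ 0 < δ₀ ∧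
      ∀ (Ω : Set (EuclideanSpace ℝ (Fin (d + 1)))) (g : EuclideanSpace ℝ (Fin (d + 1)) → EuclideanSpace ℝ (Fin (d + 1))) (δ : ℝ) (U : Set (EuclideanSpace ℝ (Fin (d + 1)))),
        IsLipschitzGraphDomain d L₀ Ω →
        0 < δ → δ < δ₀ →
        IsOpen U → Ω ⊆ U → ContDiffOn ℝ 1 g U →
        (∀ z ∈ Ω, ∀ z' ∈ Ω,
          L⁻¹ * dist z z' ≤ dist (g z) (g z') ∧ dist (g z) (g z') ≤ L * dist z z') →
        (∀ w ∈ Ω, ∃ B : EuclideanSpace ℝ (Fin (d + 1)) →L[ℝ] EuclideanSpace ℝ (Fin (d + 1)),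
          (fderiv ℝ g w).comp B = ContinuousLinearMap.id ℝ (EuclideanSpace ℝ (Fin (d + 1))) ∧
          B.comp (fderiv ℝ g w) = ContinuousLinearMap.id ℝ (EuclideanSpace ℝ (Fin (d + 1))) ∧
          ∀ z ∈ Ω, ‖(fderiv ℝ g z).comp B - ContinuousLinearMap.id ℝ (EuclideanSpace ℝ (Fin (d + 1)))‖ ≤ δ) →
        IsLipschitzGraphDomain d L₁ (g '' Ω) := by
  obtain ⟨L₁, δ₀, hL₁, hδ₀, h⟩ :=
    image_lipschitz_graph_domain_of_slowly_varying_derivative_general d L₀ L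
  refine ⟨L₁, δ₀, hL₁, hδ₀, fun Ω g δ U hΩ _ hδ hU hΩU hg hL hinv ↦ ?_⟩
  obtain ⟨w, hw⟩ := hΩ.2.1.nonempty
  obtain ⟨B, hDB, hBD, hvar⟩ := hinv w hw
  have hdiff : DifferentiableOn ℝ g U := hg.differentiableOn one_ne_zero
  let A := ContinuousLinearEquiv.equivOfInverse' (fderiv ℝ g w) B hDB hBD
  have hA : HasFDerivAt g A.toContinuousLinearMap w :=
    (hdiff.differentiableAt (hU.mem_nhds (hΩU hw))).hasFDerivAt
  obtain ⟨hA_norm, hA_symm_norm⟩ := norm_le_and_norm_symm_le_of_hasFDerivAt hA <|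
    (hΩ.1.eventually_mem hw).mono fun z hz ↦ hL z hz w hw
  exact h Ω g δ A hΩ hδ (hdiff.mono hΩU) hA_norm hA_symm_norm hvar

end
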